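/- arXiv:1912.10324 — 2 statements merged into one kernel-verified Lean document; each statement's English description precedes it below -/
import Mathlib

section
/- Let n, k, r be integers with r ≥ 2 and 1 ≤ k ≤ n. If 𝒜 ⊆ 𝒮_{n,k,r} is an intersecting family, then |𝒜| ≤ r^(k−1) · C(n−1, k−1). -/
open Finset

/-- The family of `r`-signed `k`-sets on `[n] = {1, …, n}`: finsets of pairs `(x, a)`
with `x ∈ [n]`, `a ∈ [r]`, having `k` elements with pairwise distinct first coordinates. -/
def signedSets (n k r : ℕ) : Finset (Finset (ℕ × ℕ)) :=
  ((Finset.Icc 1 n ×ˢ Finset.Icc 1 r).powerset).filter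
    (fun A => A.card = k ∧ (A.image Prod.fst).card = k)

/-!
This is Katona's circle method, following Bollobás and Leader. Arrange the `n * r` signed points
on a circle, running through `1, …, n` once for each sign. An arc of length `k ≤ n` is then a
signed `k`-set, and since `2 * k ≤ n * r`, at most `k` of the `n * r` arcs pairwise intersect.
The permutations of the signed points that permute the fibres over `[n]` act transitively on the
signed `k`-sets and preserve intersections, so averaging over them shows that an intersecting
family contains at most a fraction `k / (n * r)` of all `r ^ k * n.choose k` signed `k`-sets.
-/

open MulAction
open scoped Pointwise

section Averaging

variable {G X : Type*} [Group G] [MulAction G X] [DecidableEq X] {𝒜 : Finset X}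

theorem card_filter_smul_mem [Fintype G] {x : X} (h𝒜 : (𝒜 : Set X) ⊆ orbit G x) :
    #{g : G | g • x ∈ 𝒜} = #𝒜 * Nat.card (stabilizer G x) := by
  have card_fiber : ∀ a ∈ 𝒜, #{g ∈ {g : G | g • x ∈ 𝒜} | g • x = a} =
      Nat.card (stabilizer G x) := by
    intro a ha
    obtain ⟨h, rfl⟩ := h𝒜 ha
    rw [Nat.card_eq_fintype_card, Fintype.card_subtype]
    refine (card_equiv (Equiv.mulLeft h) fun g => ?_).symm
    simp only [mem_filter, mem_univ, true_and, mem_stabilizer_iff, Equiv.coe_mulLeft, mul_smul,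
      smul_left_cancel_iff]
    exact ⟨fun hg => ⟨by rwa [hg], hg⟩, And.right⟩
  have hmaps : Set.MapsTo (· • x) (({g : G | g • x ∈ 𝒜} : Finset G) : Set G) 𝒜 :=
    fun g hg => (mem_filter.1 hg).2
  rw [card_eq_sum_card_fiberwise hmaps, sum_congr rfl card_fiber, sum_const, smul_eq_mul]

theorem card_filter_smul_mem_mul_ncard_orbit [Fintype G] {x : X}
    (h𝒜 : (𝒜 : Set X) ⊆ orbit G x) :
    #{g : G | g • x ∈ 𝒜} * (orbit G x).ncard = #𝒜 * Fintype.card G := by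
  rw [card_filter_smul_mem h𝒜, mul_assoc, ← index_stabilizer, Subgroup.card_mul_index,
    Nat.card_eq_fintype_card]

theorem card_mul_card_le_mul_ncard_of_orbit_eq [Finite G] {ι : Type*} {T : Finset ι} {x : ι → X}
    {S : Set X} {k : ℕ} (hx : ∀ i ∈ T, orbit G (x i) = S) (h𝒜 : (𝒜 : Set X) ⊆ S)
    (hk : ∀ g : G, #{i ∈ T | g • x i ∈ 𝒜} ≤ k) : #𝒜 * #T ≤ k * S.ncard := by
  have := Fintype.ofFinite G
  refine Nat.le_of_mul_le_mul_right ?_ (Fintype.card_pos (α := G))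
  calc #𝒜 * #T * Fintype.card G
      = ∑ i ∈ T, #{g : G | g • x i ∈ 𝒜} * S.ncard := by
        rw [mul_right_comm, mul_comm, ← smul_eq_mul, ← sum_const]
        refine sum_congr rfl fun i hi => ?_
        rw [← hx i hi] at h𝒜 ⊢
        exact (card_filter_smul_mem_mul_ncard_orbit h𝒜).symm
    _ = (∑ g : G, #{i ∈ T | g • x i ∈ 𝒜}) * S.ncard := by
        rw [← sum_mul]
        congr 1
        exact sum_card_bipartiteAbove_eq_sum_card_bipartiteBelow fun i (g : G) => g • x i ∈ 𝒜
    _ ≤ Fintype.card G * k * S.ncard := by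
        gcongr
        exact sum_le_card_nsmul _ _ _ fun g _ => hk g
    _ = k * S.ncard * Fintype.card G := by ring

end Averaging

theorem card_le_of_pairwise_arcs_meet {N k : ℕ} (hN : 2 * k ≤ N) {T : Finset ℕ}
    (hT : ∀ i ∈ T, i < N)
    (hmeet : ∀ i ∈ T, ∀ j ∈ T, ∃ s < k, ∃ t < k, i + s ≡ j + t [MOD N]) : #T ≤ k := by
  obtain rfl | ⟨i, hi⟩ := T.eq_empty_or_nonempty
  · simp
  have not_modEq_add : ∀ j ∈ T, ∀ l ∈ T, ¬ j ≡ l + k [MOD N] := by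
    intro j hj l hl hjl
    obtain ⟨s, hs, t, ht, hst⟩ := hmeet j hj l hl
    have hkst : k + s ≡ t [MOD N] := by
      refine Nat.ModEq.add_left_cancel' l ?_
      rw [← add_assoc]
      exact (hjl.symm.add_right s).trans hst
    have := hkst.eq_of_lt_of_lt (by omega) (by omega)
    omega
  -- Every arc either starts at some `i + s` with `s < k` or ends just before it, and the two arcs
  -- attached in this way to the same `s` are disjoint.
  rw [← card_range k]
  refine card_le_card_of_forall_subsingleton
    (fun j s => j ≡ i + s [MOD N] ∨ j + k ≡ i + s [MOD N]) (fun j hj => ?_) fun s _ => ?_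
  · obtain ⟨s, hs, t, ht, hst⟩ := hmeet i hi j hj
    obtain hts | hst_lt := le_or_gt t s
    · refine ⟨s - t, mem_range.2 (by omega), Or.inl (Nat.ModEq.add_right_cancel' t ?_)⟩
      rw [add_assoc, Nat.sub_add_cancel hts]
      exact hst.symm
    · refine ⟨k + s - t, mem_range.2 (by omega), Or.inr (Nat.ModEq.add_right_cancel' t ?_)⟩
      rw [add_assoc i, Nat.sub_add_cancel (by omega), add_right_comm, add_left_comm, add_comm k]
      exact (hst.add_right k).symm
  · rintro j ⟨hj, hjs | hjs⟩ l ⟨hl, hls | hls⟩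
    · exact (hjs.trans hls.symm).eq_of_lt_of_lt (hT j hj) (hT l hl)
    · exact (not_modEq_add j hj l hl (hjs.trans hls.symm)).elim
    · exact (not_modEq_add l hl j hj (hls.trans hjs.symm)).elim
    · exact ((hjs.trans hls.symm).add_right_cancel' k).eq_of_lt_of_lt (hT j hj) (hT l hl)

/-- The graphs of the partial functions from `α` to `β` with a domain of size `k`: the signed
`k`-sets on `α` with signs in `β`. -/
def partialGraphs (α β : Type*) (k : ℕ) : Set (Finset (α × β)) :=
  {A | #A = k ∧ Set.InjOn Prod.fst (A : Set (α × β))}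

section PartialGraphs

variable {α β : Type*} {k : ℕ}

theorem exists_coe_eq_graphOn_of_mem_partialGraphs [Nonempty β] {A : Finset (α × β)}
    (hA : A ∈ partialGraphs α β k) :
    ∃ (u : Finset α) (f : α → β), #u = k ∧ (A : Set (α × β)) = Set.graphOn f u := by
  classical
  obtain ⟨hcard, hinj⟩ := hA
  obtain ⟨f, hf⟩ := Set.exists_eq_graphOn_image_fst.2 hinj
  refine ⟨A.image Prod.fst, f, (card_image_of_injOn hinj).trans hcard, ?_⟩
  rwa [coe_image]

/-- The graph, as a finset of pairs, of a function defined on the finset `u` only. It makes a member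
of `partialGraphs` correspond to exactly one pair `(u, f)`, which is how these are counted. -/
def graphOver (u : Finset α) (f : u → β) : Finset (α × β) :=
  univ.map ⟨fun x => (x.1, f x), fun _ _ h => Subtype.ext (congrArg Prod.fst h)⟩

theorem mem_graphOver {u : Finset α} {f : u → β} {p : α × β} :
    p ∈ graphOver u f ↔ ∃ h : p.1 ∈ u, f ⟨p.1, h⟩ = p.2 := by
  constructor
  · intro hp
    obtain ⟨x, -, rfl⟩ := mem_map.1 hp
    exact ⟨x.2, rfl⟩
  · rintro ⟨h, hf⟩
    exact mem_map.2 ⟨⟨p.1, h⟩, mem_univ _, Prod.ext rfl hf⟩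

theorem graphOver_mem_partialGraphs (u : Finset α) (f : u → β) :
    graphOver u f ∈ partialGraphs α β #u := by
  refine ⟨by rw [graphOver, card_map, card_univ, Fintype.card_coe], fun p hp q hq hpq => ?_⟩
  obtain ⟨hpu, hpf⟩ := mem_graphOver.1 hp
  obtain ⟨hqu, hqf⟩ := mem_graphOver.1 hq
  refine Prod.ext hpq ?_
  rw [← hpf, ← hqf]
  congr

theorem graphOver_injective :
    Function.Injective fun p : (u : Finset α) × (u → β) => graphOver p.1 p.2 := by
  rintro ⟨u, f⟩ ⟨v, g⟩ (h : graphOver u f = graphOver v g)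
  have hmem (p : α × β) := by simpa only [mem_graphOver] using Finset.ext_iff.1 h p
  obtain rfl : u = v := by
    ext x
    exact ⟨fun hx => ((hmem (x, f ⟨x, hx⟩)).1 ⟨hx, rfl⟩).1,
      fun hx => ((hmem (x, g ⟨x, hx⟩)).2 ⟨hx, rfl⟩).1⟩
  obtain rfl : f = g := funext fun x => ((hmem (x, f x)).1 ⟨x.2, rfl⟩).2.symm
  rfl

theorem exists_eq_graphOver_of_mem_partialGraphs [Nonempty β] {A : Finset (α × β)}
    (hA : A ∈ partialGraphs α β k) : ∃ (u : Finset α) (f : u → β), #u = k ∧ graphOver u f = A := by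
  obtain ⟨u, f, hu, hAf⟩ := exists_coe_eq_graphOn_of_mem_partialGraphs hA
  refine ⟨u, fun x => f x, hu, ?_⟩
  ext p
  rw [mem_graphOver, ← mem_coe (s := A), hAf, Set.mem_graphOn, mem_coe]
  exact ⟨fun ⟨hu, hf⟩ => ⟨hu, hf⟩, fun ⟨hu, hf⟩ => ⟨hu, hf⟩⟩

theorem ncard_partialGraphs (α β : Type*) [Fintype α] [Fintype β] [Nonempty β] (k : ℕ) :
    (partialGraphs α β k).ncard = (Fintype.card α).choose k * Fintype.card β ^ k := by
  classical
  let graph (p : (u : {u : Finset α // #u = k}) × (u.1 → β)) : partialGraphs α β k :=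
    ⟨graphOver p.1.1 p.2, by simpa only [p.1.2] using graphOver_mem_partialGraphs p.1.1 p.2⟩
  have hgraph : Function.Bijective graph := by
    constructor
    · rintro ⟨⟨u, hu⟩, f⟩ ⟨⟨v, hv⟩, g⟩ h
      cases graphOver_injective (a₁ := ⟨u, f⟩) (a₂ := ⟨v, g⟩) (congrArg Subtype.val h)
      rfl
    · rintro ⟨A, hA⟩
      obtain ⟨u, f, hu, rfl⟩ := exists_eq_graphOver_of_mem_partialGraphs hA
      exact ⟨⟨⟨u, hu⟩, f⟩, rfl⟩
  rw [← Nat.card_coe_set_eq, ← Nat.card_eq_of_bijective graph hgraph, Nat.card_eq_fintype_card,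
    Fintype.card_sigma, ← Fintype.card_finset_len, ← card_univ, ← smul_eq_mul, ← sum_const]
  refine sum_congr rfl fun u _ => ?_
  rw [Fintype.card_fun, Fintype.card_coe, u.2]

end PartialGraphs

/-- The permutations of `α × β` that permute the fibres of the first projection: the
symmetries of the signed `k`-sets over which Katona's argument averages. -/
def fiberPerms (α β : Type*) : Subgroup (Equiv.Perm (α × β)) where
  carrier := {g | ∀ p q, (g p).1 = (g q).1 ↔ p.1 = q.1}
  one_mem' _ _ := Iff.rfl
  mul_mem' hg hh p q := (hg _ _).trans (hh p q)
  inv_mem' {g} hg p q := by simpa using (hg (g⁻¹ p) (g⁻¹ q)).symm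

section FiberPerms

variable {α β : Type*} [DecidableEq α] [DecidableEq β] {k : ℕ}

theorem smul_mem_partialGraphs {A : Finset (α × β)} (g : fiberPerms α β)
    (hA : A ∈ partialGraphs α β k) : g • A ∈ partialGraphs α β k := by
  refine ⟨(card_smul_finset g A).trans hA.1, ?_⟩
  rw [coe_smul_finset]
  rintro _ ⟨p, hp, rfl⟩ _ ⟨q, hq, rfl⟩ hpq
  rw [hA.2 hp hq ((g.2 p q).1 hpq)]

theorem exists_smul_eq_of_mem_partialGraphs [Nonempty β] {A B : Finset (α × β)}
    (hA : A ∈ partialGraphs α β k) (hB : B ∈ partialGraphs α β k) :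
    ∃ g : fiberPerms α β, g • A = B := by
  obtain ⟨u, f, hu, hAf⟩ := exists_coe_eq_graphOn_of_mem_partialGraphs hA
  obtain ⟨v, f', hv, hBf'⟩ := exists_coe_eq_graphOn_of_mem_partialGraphs hB
  have := Set.powersetCard.isPretransitive (α := α) (n := k)
  obtain ⟨σ, hσ⟩ := exists_smul_eq (Equiv.Perm α)
    (⟨u, hu⟩ : Set.powersetCard α k) ⟨v, hv⟩
  obtain rfl : σ • u = v := congrArg Subtype.val hσ
  let g : Equiv.Perm (α × β) := Equiv.prodShear σ fun x => Equiv.swap (f x) (f' (σ x))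
  refine ⟨⟨g, fun p q => σ.injective.eq_iff⟩, coe_injective ?_⟩
  rw [coe_smul_finset, hAf, hBf', coe_smul_finset]
  simp only [Set.graphOn, ← Set.image_smul, Set.image_image]
  refine Set.image_congr fun x _ => ?_
  change g (x, f x) = (σ x, f' (σ x))
  simp [g]

theorem orbit_fiberPerms_eq_partialGraphs [Nonempty β] {A : Finset (α × β)}
    (hA : A ∈ partialGraphs α β k) : orbit (fiberPerms α β) A = partialGraphs α β k := by
  refine Set.Subset.antisymm ?_ fun B hB => exists_smul_eq_of_mem_partialGraphs hA hB
  rintro _ ⟨g, rfl⟩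
  exact smul_mem_partialGraphs g hA

end FiberPerms

theorem exists_cyclic_enumeration (α β : Type*) [Fintype α] [Fintype β] [Nonempty α]
    [Nonempty β] :
    ∃ c : ℕ → α × β, (∀ a b, (c a).1 = (c b).1 → a ≡ b [MOD Fintype.card α]) ∧
      ∀ a b, c a = c b → a ≡ b [MOD Fintype.card α * Fintype.card β] := by
  let eα := (Fintype.equivFin α).symm
  let eβ := (Fintype.equivFin β).symm
  -- Run through `α` again and again, taking the next element of `β` after each complete pass.
  let c (a : ℕ) : α × β := (eα (Fin.ofNat _ a), eβ (Fin.ofNat _ (a / Fintype.card α)))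
  have fst_modEq (a b : ℕ) (h : (c a).1 = (c b).1) : a ≡ b [MOD Fintype.card α] :=
    congrArg Fin.val (eα.injective h)
  have snd_modEq (a b : ℕ) (h : (c a).2 = (c b).2) :
      a / Fintype.card α ≡ b / Fintype.card α [MOD Fintype.card β] :=
    congrArg Fin.val (eβ.injective h)
  refine ⟨c, fst_modEq, fun a b h => ?_⟩
  rw [Nat.ModEq, Nat.mod_mul, Nat.mod_mul, fst_modEq a b (congrArg Prod.fst h),
    snd_modEq a b (congrArg Prod.snd h)]

theorem image_range_mem_partialGraphs {α β : Type*} [DecidableEq α] [DecidableEq β] {n k : ℕ}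
    {c : ℕ → α × β} (hc : ∀ a b, (c a).1 = (c b).1 → a ≡ b [MOD n]) (hk : k ≤ n) (i : ℕ) :
    (range k).image (fun s => c (i + s)) ∈ partialGraphs α β k := by
  have hinj : Set.InjOn (Prod.fst ∘ fun s => c (i + s)) (range k : Set ℕ) := by
    intro s hs t ht hst
    rw [coe_range, Set.mem_Iio] at hs ht
    exact ((hc _ _ hst).add_left_cancel' i).eq_of_lt_of_lt (hs.trans_le hk) (ht.trans_le hk)
  refine ⟨(card_image_of_injOn hinj.of_comp).trans (card_range k), ?_⟩
  rw [coe_image]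
  exact hinj.image_of_comp

section Intersecting

variable {α β : Type*} [DecidableEq α] [DecidableEq β] {k : ℕ} {𝒜 : Finset (Finset (α × β))}

theorem card_mul_le_of_intersecting_partialGraphs [Fintype α] [Fintype β]
    (hβ : 2 ≤ Fintype.card β) (hk : k ≤ Fintype.card α)
    (h𝒜 : (𝒜 : Set (Finset (α × β))) ⊆ partialGraphs α β k)
    (hint : (𝒜 : Set (Finset (α × β))).Intersecting) :
    #𝒜 * (Fintype.card α * Fintype.card β) ≤ k * (partialGraphs α β k).ncard := by
  obtain hα | hα := isEmpty_or_nonempty α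
  · simp
  have : Nonempty β := Fintype.card_pos_iff.1 (by omega)
  obtain ⟨c, hc_fst, hc⟩ := exists_cyclic_enumeration α β
  let arc (i : ℕ) : Finset (α × β) := (range k).image fun s => c (i + s)
  have horbit (i : ℕ) : orbit (fiberPerms α β) (arc i) = partialGraphs α β k :=
    orbit_fiberPerms_eq_partialGraphs (image_range_mem_partialGraphs hc_fst hk i)
  have harcs (g : fiberPerms α β) :
      #{i ∈ range (Fintype.card α * Fintype.card β) | g • arc i ∈ 𝒜} ≤ k := by
    refine card_le_of_pairwise_arcs_meet (N := Fintype.card α * Fintype.card β)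
      (by nlinarith) (fun i hi => mem_range.1 (mem_filter.1 hi).1) fun i hi j hj => ?_
    have hmeet := hint (mem_filter.1 hi).2 (mem_filter.1 hj).2
    rw [← disjoint_coe, coe_smul_finset, coe_smul_finset, Set.disjoint_smul_set, disjoint_coe,
      not_disjoint_iff] at hmeet
    obtain ⟨p, hpi, hpj⟩ := hmeet
    obtain ⟨s, hs, rfl⟩ := mem_image.1 hpi
    obtain ⟨t, ht, hst⟩ := mem_image.1 hpj
    exact ⟨s, mem_range.1 hs, t, mem_range.1 ht, hc _ _ hst.symm⟩
  simpa only [card_range] using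
    card_mul_card_le_mul_ncard_of_orbit_eq (fun i _ => horbit i) h𝒜 harcs

theorem card_le_of_intersecting_partialGraphs [Fintype α] [Fintype β]
    (hβ : 2 ≤ Fintype.card β) (hk : 1 ≤ k) (hkα : k ≤ Fintype.card α)
    (h𝒜 : (𝒜 : Set (Finset (α × β))) ⊆ partialGraphs α β k)
    (hint : (𝒜 : Set (Finset (α × β))).Intersecting) :
    #𝒜 ≤ Fintype.card β ^ (k - 1) * (Fintype.card α - 1).choose (k - 1) := by
  have : Nonempty β := Fintype.card_pos_iff.1 (by omega)
  have h := card_mul_le_of_intersecting_partialGraphs hβ hkα h𝒜 hint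
  rw [ncard_partialGraphs] at h
  obtain ⟨m, hm⟩ := Nat.exists_eq_add_of_le' (hk.trans hkα)
  obtain ⟨l, rfl⟩ := Nat.exists_eq_add_of_le' hk
  rw [hm] at h ⊢
  have hpos : 0 < (m + 1) * Fintype.card β := by positivity
  refine Nat.le_of_mul_le_mul_right (h.trans_eq ?_) hpos
  calc (l + 1) * ((m + 1).choose (l + 1) * Fintype.card β ^ (l + 1))
      = (m + 1).choose (l + 1) * (l + 1) * Fintype.card β ^ (l + 1) := by ring
    _ = (m + 1) * m.choose l * Fintype.card β ^ (l + 1) := by rw [Nat.add_one_mul_choose_eq]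
    _ = Fintype.card β ^ l * m.choose l * ((m + 1) * Fintype.card β) := by ring

theorem signed_EKR_general {s : Finset α} {t : Finset β} (ht : 2 ≤ #t) (hk : 1 ≤ k)
    (hks : k ≤ #s) (hsub : ∀ A ∈ 𝒜, A ⊆ s ×ˢ t)
    (h𝒜 : (𝒜 : Set (Finset (α × β))) ⊆ partialGraphs α β k)
    (hint : (𝒜 : Set (Finset (α × β))).Intersecting) :
    #𝒜 ≤ #t ^ (k - 1) * (#s - 1).choose (k - 1) := by
  let φ : s × t ↪ α × β := (Function.Embedding.subtype _).prodMap (Function.Embedding.subtype _)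
  let ℬ : Finset (Finset (s × t)) := 𝒜.preimage (Finset.map φ) (map_injective φ).injOn
  have hcard : #ℬ = #𝒜 := by
    rw [card_preimage, filter_true_of_mem fun A hA => ?_]
    have hAφ : A ⊆ univ.map φ := fun p hp => by
      obtain ⟨hps, hpt⟩ := mem_product.1 (hsub A hA hp)
      exact mem_map.2 ⟨(⟨p.1, hps⟩, ⟨p.2, hpt⟩), mem_univ _, rfl⟩
    obtain ⟨B, -, rfl⟩ := subset_map_iff.1 hAφ
    exact ⟨B, rfl⟩
  rw [← hcard, ← Fintype.card_coe s, ← Fintype.card_coe t]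
  refine card_le_of_intersecting_partialGraphs (by simpa using ht) hk (by simpa using hks)
    (fun B hB => ?_) fun B hB C hC => ?_
  · obtain ⟨hBk, hBinj⟩ := h𝒜 (mem_preimage.1 hB)
    refine ⟨(card_map φ).symm.trans hBk, fun p hp q hq hpq => ?_⟩
    exact φ.injective (hBinj (mem_map_of_mem φ hp) (mem_map_of_mem φ hq) (congrArg Subtype.val hpq))
  · rw [← disjoint_map φ]
    exact hint (mem_preimage.1 hB) (mem_preimage.1 hC)

end Intersecting

theorem mem_signedSets {n k r : ℕ} {A : Finset (ℕ × ℕ)} :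
    A ∈ signedSets n k r ↔ A ⊆ Icc 1 n ×ˢ Icc 1 r ∧ A ∈ partialGraphs ℕ ℕ k := by
  rw [signedSets, mem_filter, mem_powerset, partialGraphs, Set.mem_ofPred_eq, ← card_image_iff]
  refine and_congr_right fun _ => and_congr_right fun hA => ?_
  rw [hA]

theorem signed_EKR (n k r : ℕ) (hr : 2 ≤ r) (hk : 1 ≤ k) (hkn : k ≤ n)
    (𝒜 : Finset (Finset (ℕ × ℕ))) (h𝒜 : 𝒜 ⊆ signedSets n k r)
    (hint : ∀ A ∈ 𝒜, ∀ B ∈ 𝒜, (A ∩ B).Nonempty) :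
    𝒜.card ≤ r ^ (k - 1) * Nat.choose (n - 1) (k - 1) := by
  simpa only [Nat.card_Icc, Nat.add_sub_cancel] using
    signed_EKR_general (s := Icc 1 n) (t := Icc 1 r) (by simpa using hr) hk (by simpa using hkn)
      (fun A hA => (mem_signedSets.1 (h𝒜 hA)).1) (fun A hA => (mem_signedSets.1 (h𝒜 hA)).2)
      fun A hA B hB => not_disjoint_iff_nonempty_inter.2 (hint A hA B hB)
end

section
/- (Hilton–Milner Theorem) Let n, k be integers with n ≥ 2k ≥ 4. If ℱ is an intersecting family of k-element subsets of [n] that is non-trivial (i.e., there is no element belonging to every member of ℱ), then |ℱ| ≤ C(n−1, k−1) − C(n−k−1, k−1) + 1. -/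
open Finset

/-!
Fix a point `x` of the ground set `V` and shift the family away from `x`, that is, replace `x` by
`i` in its members wherever possible, for every `i ∈ V`. Once this is stable, the members avoiding
`x` form a family of the same kind on `V \ {x}`, and the links of `x` in the members containing it
still intersect: two disjoint links would leave room to shift one of the members away from `x` and
off the other. Adding the bounds for both parts gives the bound for `V` by Pascal's rule.

Shifting preserves intersections but may create a common element. In that case every member meets
some pair `{i, x}`. The members meeting the pair only in `i` and those meeting it only in `x` are
then cross-intersecting, and two nonempty cross-intersecting families satisfy a bound which follows
by the same induction.
-/

open scoped FinsetFamily

namespace HiltonMilner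

variable {α : Type*} {V W T B : Finset α} {𝒜 ℬ ℒ ℳ : Finset (Finset α)} {i x : α} {k l : ℕ}

/-- Two families are cross-intersecting if every member of the first meets every member of the
second. An intersecting family is encoded as `CrossIntersecting 𝒜 𝒜`, which unfolds to
`Set.Intersecting`. -/
def CrossIntersecting (𝒜 ℬ : Finset (Finset α)) : Prop :=
  ∀ ⦃A⦄, A ∈ 𝒜 → ∀ ⦃B⦄, B ∈ ℬ → ¬Disjoint A B

/-- A family is non-trivial if its members have no common element. -/
def IsNontrivial (𝒜 : Finset (Finset α)) : Prop :=
  ∀ x, ∃ A ∈ 𝒜, x ∉ A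

lemma CrossIntersecting.symm (h : CrossIntersecting 𝒜 ℬ) : CrossIntersecting ℬ 𝒜 :=
  fun _ hA _ hB hAB ↦ h hB hA hAB.symm

lemma CrossIntersecting.pos_of_nonempty (h : CrossIntersecting 𝒜 ℬ) (h𝒜 : 𝒜 ⊆ V.powersetCard k)
    (hne𝒜 : 𝒜.Nonempty) (hneℬ : ℬ.Nonempty) : 0 < k := by
  obtain ⟨A, hA⟩ := hne𝒜
  obtain ⟨B, hB⟩ := hneℬ
  obtain ⟨a, ha, -⟩ := not_disjoint_iff.1 (h hA hB)
  exact (mem_powersetCard.1 (h𝒜 hA)).2 ▸ card_pos.2 ⟨a, ha⟩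

lemma CrossIntersecting.two_le_of_isNontrivial (h : CrossIntersecting 𝒜 𝒜)
    (h𝒜 : 𝒜 ⊆ V.powersetCard k) (hnt : IsNontrivial 𝒜) (hne : 𝒜.Nonempty) : 2 ≤ k := by
  obtain ⟨A, hA⟩ := hne
  obtain ⟨a, ha, -⟩ := not_disjoint_iff.1 (h hA hA)
  obtain ⟨B, hB, haB⟩ := hnt a
  obtain ⟨b, hb, hbB⟩ := not_disjoint_iff.1 (h hA hB)
  rw [← (mem_powersetCard.1 (h𝒜 hA)).2]
  exact one_lt_card.2 ⟨a, ha, b, hb, by grind⟩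

/-! ### Shifting -/

section

variable [DecidableEq α]

/-- A family is shifted away from `x` if replacing `x` by an element of `V` in one of its members
never leads out of the family; this is the outcome of iterated shifting. -/
def IsShiftedAway (x : α) (V : Finset α) (𝒜 : Finset (Finset α)) : Prop :=
  ∀ i ∈ V, UV.IsCompressed {i} {x} 𝒜

lemma compress_singleton (i x : α) (A : Finset α) :
    UV.compress {i} {x} A = if i ∉ A ∧ x ∈ A then insert i (A.erase x) else A := by
  rw [UV.compress]
  simp only [disjoint_singleton_left, singleton_subset_iff]
  split_ifs with h
  · ext a
    simp only [sup_eq_union, mem_sdiff, mem_union, mem_singleton, mem_insert, mem_erase]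
    grind
  · rfl

lemma mem_compression_singleton {A : Finset α} :
    A ∈ 𝓒 {i} {x} 𝒜 ↔ A ∈ 𝒜 ∧ (i ∉ A → x ∈ A → insert i (A.erase x) ∈ 𝒜) ∨
      A ∉ 𝒜 ∧ ∃ B ∈ 𝒜, i ∉ B ∧ x ∈ B ∧ insert i (B.erase x) = A := by
  rw [UV.mem_compression]
  simp only [compress_singleton]
  grind

lemma compression_subset_powersetCard (h𝒜 : 𝒜 ⊆ V.powersetCard k) (hi : i ∈ V) :
    𝓒 {i} {x} 𝒜 ⊆ V.powersetCard k := by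
  intro A hA
  obtain ⟨hA, -⟩ | ⟨-, B, hB, hiB, hxB, rfl⟩ := mem_compression_singleton.1 hA
  · exact h𝒜 hA
  · obtain ⟨hBV, hBk⟩ := mem_powersetCard.1 (h𝒜 hB)
    refine mem_powersetCard.2 ⟨insert_subset hi ((erase_subset _ _).trans hBV), ?_⟩
    rw [card_insert_of_notMem (fun h ↦ hiB (mem_of_mem_erase h)), card_erase_add_one hxB, hBk]

lemma CrossIntersecting.compression (h : CrossIntersecting 𝒜 ℬ) :
    CrossIntersecting (𝓒 {i} {x} 𝒜) (𝓒 {i} {x} ℬ) := by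
  have fixed_moved : ∀ {𝒜 ℬ : Finset (Finset α)}, CrossIntersecting 𝒜 ℬ →
      ∀ {A B}, A ∈ 𝒜 → (i ∉ A → x ∈ A → insert i (A.erase x) ∈ 𝒜) → B ∈ ℬ → i ∉ B →
        ¬Disjoint A (insert i (B.erase x)) := by
    intro 𝒜 ℬ h A B hA hA' hB hiB
    by_cases hi : i ∈ A
    · exact not_disjoint_iff.2 ⟨i, hi, mem_insert_self _ _⟩
    by_cases hx : x ∈ A
    · obtain ⟨a, ha, haB⟩ := not_disjoint_iff.1 (h (hA' hi hx) hB)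
      exact not_disjoint_iff.2 ⟨a, by grind, by grind⟩
    · obtain ⟨a, ha, haB⟩ := not_disjoint_iff.1 (h hA hB)
      exact not_disjoint_iff.2 ⟨a, ha, by grind⟩
  intro A hA B hB
  rw [mem_compression_singleton] at hA hB
  obtain ⟨hA, hA'⟩ | ⟨-, A, hA, hiA, -, rfl⟩ := hA <;>
    obtain ⟨hB, hB'⟩ | ⟨-, B, hB, hiB, -, rfl⟩ := hB
  · exact h hA hB
  · exact fixed_moved h hA hA' hB hiB
  · exact fun hAB ↦ fixed_moved h.symm hB hB' hA hiA hAB.symm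
  · exact not_disjoint_iff.2 ⟨i, mem_insert_self _ _, mem_insert_self _ _⟩

lemma forall_mem_or_mem_of_not_isNontrivial_compression (h𝒜 : IsNontrivial 𝒜)
    (h : ¬IsNontrivial (𝓒 {i} {x} 𝒜)) : ∀ A ∈ 𝒜, i ∈ A ∨ x ∈ A := by
  simp only [IsNontrivial, not_forall, not_exists, not_and, not_not] at h
  obtain ⟨y, hy⟩ := h
  have key : ∀ A ∈ 𝒜, y ∈ A ∨ y = i ∧ x ∈ A := by
    intro A hA
    have := hy _ (UV.compress_mem_compression hA)
    rw [compress_singleton] at this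
    grind
  obtain ⟨B, hB, hyB⟩ := h𝒜 y
  obtain rfl := ((key B hB).resolve_left hyB).1
  exact fun A hA ↦ (key A hA).imp_right And.right

lemma filter_mem_compression_subset : {A ∈ 𝓒 {i} {x} 𝒜 | x ∈ A} ⊆ {A ∈ 𝒜 | x ∈ A} := by
  intro A hA
  obtain ⟨hA, hxA⟩ := mem_filter.1 hA
  exact mem_filter.2
    ⟨UV.mem_of_mem_compression hA (singleton_subset_iff.2 hxA) (by simp), hxA⟩

lemma card_filter_mem_compression_lt (h : ¬UV.IsCompressed {i} {x} 𝒜) :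
    #{A ∈ 𝓒 {i} {x} 𝒜 | x ∈ A} < #{A ∈ 𝒜 | x ∈ A} := by
  refine card_lt_card (filter_mem_compression_subset.ssubset_of_not_subset fun hsub ↦ h ?_)
  refine (eq_of_subset_of_card_le (fun A hA ↦ ?_) (UV.card_compression _ _ _).le).symm
  by_cases hx : x ∈ A
  · exact (mem_filter.1 (hsub (mem_filter.2 ⟨hA, hx⟩))).1
  · simpa [compress_singleton, hx] using UV.compress_mem_compression (u := {i}) (v := {x}) hA

theorem compression_induction₂ {p : Finset (Finset α) → Finset (Finset α) → Prop} (x : α)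
    (V : Finset α) (shifted : ∀ 𝒜 ℬ, IsShiftedAway x V 𝒜 → IsShiftedAway x V ℬ → p 𝒜 ℬ)
    (step : ∀ 𝒜 ℬ, ∀ i ∈ V, p (𝓒 {i} {x} 𝒜) (𝓒 {i} {x} ℬ) → p 𝒜 ℬ)
    (𝒜 ℬ : Finset (Finset α)) : p 𝒜 ℬ := by
  by_cases h : ∀ i ∈ V, UV.IsCompressed {i} {x} 𝒜 ∧ UV.IsCompressed {i} {x} ℬ
  · exact shifted 𝒜 ℬ (fun i hi ↦ (h i hi).1) fun i hi ↦ (h i hi).2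
  push Not at h
  obtain ⟨i, hi, hne⟩ := h
  have : #{A ∈ 𝓒 {i} {x} 𝒜 | x ∈ A} + #{B ∈ 𝓒 {i} {x} ℬ | x ∈ B} <
      #{A ∈ 𝒜 | x ∈ A} + #{B ∈ ℬ | x ∈ B} := by
    by_cases h𝒜 : UV.IsCompressed {i} {x} 𝒜
    · rw [h𝒜.eq]
      exact Nat.add_lt_add_left (card_filter_mem_compression_lt (hne h𝒜)) _
    · exact add_lt_add_of_lt_of_le (card_filter_mem_compression_lt h𝒜)
        (card_le_card filter_mem_compression_subset)
  exact step 𝒜 ℬ i hi (compression_induction₂ x V shifted step _ _)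
termination_by #{A ∈ 𝒜 | x ∈ A} + #{B ∈ ℬ | x ∈ B}

theorem compression_induction {p : Finset (Finset α) → Prop} (x : α) (V : Finset α)
    (shifted : ∀ 𝒜, IsShiftedAway x V 𝒜 → p 𝒜)
    (step : ∀ 𝒜, ∀ i ∈ V, p (𝓒 {i} {x} 𝒜) → p 𝒜) (𝒜 : Finset (Finset α)) : p 𝒜 :=
  compression_induction₂ (p := fun 𝒜 _ ↦ p 𝒜) x V (fun 𝒜 _ h _ ↦ shifted 𝒜 h)
    (fun 𝒜 _ ↦ step 𝒜) 𝒜 ∅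

/-! ### Links -/

lemma memberSubfamily_subset_powersetCard (x : α) (h𝒜 : 𝒜 ⊆ V.powersetCard (k + 1)) :
    𝒜.memberSubfamily x ⊆ (V.erase x).powersetCard k := by
  intro A hA
  obtain ⟨hA, hxA⟩ := mem_memberSubfamily.1 hA
  obtain ⟨hAV, hAk⟩ := mem_powersetCard.1 (h𝒜 hA)
  rw [card_insert_of_notMem hxA] at hAk
  exact mem_powersetCard.2
    ⟨subset_erase.2 ⟨(subset_insert _ _).trans hAV, hxA⟩, Nat.succ_injective hAk⟩

lemma nonMemberSubfamily_subset_powersetCard (x : α) (h𝒜 : 𝒜 ⊆ V.powersetCard k) :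
    𝒜.nonMemberSubfamily x ⊆ (V.erase x).powersetCard k := by
  intro A hA
  obtain ⟨hA, hxA⟩ := mem_nonMemberSubfamily.1 hA
  obtain ⟨hAV, hAk⟩ := mem_powersetCard.1 (h𝒜 hA)
  exact mem_powersetCard.2 ⟨subset_erase.2 ⟨hAV, hxA⟩, hAk⟩

lemma card_memberSubfamily_of_forall_mem (h : ∀ A ∈ 𝒜, x ∈ A) :
    #(𝒜.memberSubfamily x) = #𝒜 := by
  have hempty : 𝒜.nonMemberSubfamily x = ∅ := filter_false_of_mem fun A hA ↦ not_not.2 (h A hA)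
  simpa [hempty] using card_memberSubfamily_add_card_nonMemberSubfamily x 𝒜

lemma CrossIntersecting.nonMemberSubfamily (h : CrossIntersecting 𝒜 ℬ) (x : α) :
    CrossIntersecting (𝒜.nonMemberSubfamily x) (ℬ.nonMemberSubfamily x) :=
  fun _ hA _ hB ↦ h (mem_nonMemberSubfamily.1 hA).1 (mem_nonMemberSubfamily.1 hB).1

lemma CrossIntersecting.memberSubfamily_nonMemberSubfamily (h : CrossIntersecting 𝒜 ℬ) (x : α) :
    CrossIntersecting (𝒜.memberSubfamily x) (ℬ.nonMemberSubfamily x) := by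
  intro A hA B hB hAB
  obtain ⟨hB, hxB⟩ := mem_nonMemberSubfamily.1 hB
  exact h (mem_memberSubfamily.1 hA).1 hB (disjoint_insert_left.2 ⟨hxB, hAB⟩)

lemma IsShiftedAway.exists_mem_nonMemberSubfamily_disjoint (h : IsShiftedAway x V 𝒜)
    {A : Finset α} (hA : A ∈ 𝒜) (hAT : Disjoint A T) (hcard : #(A ∪ T) < #V) :
    ∃ B ∈ 𝒜.nonMemberSubfamily x, Disjoint B T := by
  by_cases hx : x ∈ A
  · obtain ⟨i, hiV, hi⟩ := exists_mem_notMem_of_card_lt_card hcard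
    obtain ⟨hiA, hiT⟩ := notMem_union.1 hi
    have hmem : insert i (A.erase x) ∈ 𝒜 := by
      have := UV.compress_mem_compression (u := {i}) (v := {x}) hA
      rwa [(h i hiV).eq, compress_singleton, if_pos ⟨hiA, hx⟩] at this
    refine ⟨_, mem_nonMemberSubfamily.2 ⟨hmem, by grind⟩, ?_⟩
    exact disjoint_insert_left.2 ⟨hiT, hAT.mono_left (erase_subset _ _)⟩
  · exact ⟨A, mem_nonMemberSubfamily.2 ⟨hA, hx⟩, hAT⟩

lemma IsShiftedAway.nonMemberSubfamily_nonempty (h : IsShiftedAway x V 𝒜)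
    (h𝒜 : 𝒜 ⊆ V.powersetCard k) (hk : k < #V) (hne : 𝒜.Nonempty) :
    (𝒜.nonMemberSubfamily x).Nonempty := by
  obtain ⟨A, hA⟩ := hne
  obtain ⟨B, hB, -⟩ := h.exists_mem_nonMemberSubfamily_disjoint hA (disjoint_empty_right A)
    (by rwa [union_empty, (mem_powersetCard.1 (h𝒜 hA)).2])
  exact ⟨B, hB⟩

lemma IsShiftedAway.isNontrivial_nonMemberSubfamily (h : IsShiftedAway x V 𝒜)
    (h𝒜 : 𝒜 ⊆ V.powersetCard k) (hk : k + 1 < #V) (hnt : IsNontrivial 𝒜) :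
    IsNontrivial (𝒜.nonMemberSubfamily x) := by
  intro y
  obtain ⟨A, hA, hyA⟩ := hnt y
  have hcard : #(A ∪ {y}) < #V := by
    rw [card_union_of_disjoint (disjoint_singleton_right.2 hyA), card_singleton,
      (mem_powersetCard.1 (h𝒜 hA)).2]
    exact hk
  obtain ⟨B, hB, hyB⟩ :=
    h.exists_mem_nonMemberSubfamily_disjoint hA (disjoint_singleton_right.2 hyA) hcard
  exact ⟨B, hB, disjoint_singleton_right.1 hyB⟩

lemma CrossIntersecting.memberSubfamily (h : CrossIntersecting 𝒜 ℬ)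
    (h𝒜 : 𝒜 ⊆ V.powersetCard k) (hℬ : ℬ ⊆ V.powersetCard l) (hV : k + l ≤ #V)
    (hs : IsShiftedAway x V 𝒜) :
    CrossIntersecting (𝒜.memberSubfamily x) (ℬ.memberSubfamily x) := by
  intro A hA B hB hAB
  obtain ⟨hA, -⟩ := mem_memberSubfamily.1 hA
  obtain ⟨hB, hxB⟩ := mem_memberSubfamily.1 hB
  have hcard : #(insert x A ∪ B) < #V := by
    have hAk := (mem_powersetCard.1 (h𝒜 hA)).2
    have hBl := (mem_powersetCard.1 (hℬ hB)).2
    have := card_union_le (insert x A) B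
    rw [card_insert_of_notMem hxB] at hBl
    omega
  obtain ⟨C, hC, hCB⟩ :=
    hs.exists_mem_nonMemberSubfamily_disjoint hA (disjoint_insert_left.2 ⟨hxB, hAB⟩) hcard
  obtain ⟨hC, hxC⟩ := mem_nonMemberSubfamily.1 hC
  exact h hC hB (disjoint_insert_right.2 ⟨hxC, hCB⟩)

end

/-! ### Counting -/

lemma choose_lt_choose_succ {m k : ℕ} (hk : 0 < k) (hkm : k ≤ m + 1) :
    m.choose k < (m + 1).choose k := by
  have := Nat.choose_eq_choose_pred_add m.succ_pos hk
  have : 0 < m.choose (k - 1) := Nat.choose_pos (by omega)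
  simp_all

lemma card_add_choose_le_of_forall_not_disjoint (h𝒜 : 𝒜 ⊆ W.powersetCard k) (hB : B ⊆ W)
    (h : ∀ A ∈ 𝒜, ¬Disjoint A B) : #𝒜 + (#W - #B).choose k ≤ (#W).choose k := by
  classical
  have hdisj : Disjoint 𝒜 ((W \ B).powersetCard k) :=
    disjoint_left.2 fun A hA hA' ↦
      h A hA (disjoint_of_subset_left (mem_powersetCard.1 hA').1 sdiff_disjoint)
  rw [← card_sdiff_of_subset hB, ← card_powersetCard, ← card_powersetCard,
    ← card_union_of_disjoint hdisj]
  exact card_le_card (union_subset h𝒜 (powersetCard_mono sdiff_subset))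

lemma CrossIntersecting.card_add_card_le_choose (h : CrossIntersecting 𝒜 ℬ)
    (h𝒜 : 𝒜 ⊆ V.powersetCard k) (hℬ : ℬ ⊆ V.powersetCard l) (hV : #V = k + l) :
    #𝒜 + #ℬ ≤ (#V).choose k := by
  classical
  have hinj : Set.InjOn (V \ ·) (ℬ : Set (Finset α)) := fun B hB C hC (hBC : V \ B = V \ C) ↦ by
    rw [← Finset.sdiff_sdiff_eq_self (mem_powersetCard.1 (hℬ hB)).1, hBC,
      Finset.sdiff_sdiff_eq_self (mem_powersetCard.1 (hℬ hC)).1]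
  have hdisj : Disjoint 𝒜 (ℬ.image (V \ ·)) := by
    refine disjoint_left.2 fun A hA hA' ↦ ?_
    obtain ⟨B, hB, rfl⟩ := mem_image.1 hA'
    exact h hA hB sdiff_disjoint
  have himage : ℬ.image (V \ ·) ⊆ V.powersetCard k := by
    refine image_subset_iff.2 fun B hB ↦ ?_
    obtain ⟨hBV, hBl⟩ := mem_powersetCard.1 (hℬ hB)
    exact mem_powersetCard.2 ⟨sdiff_subset, by rw [card_sdiff_of_subset hBV]; omega⟩
  rw [← card_image_of_injOn hinj, ← card_union_of_disjoint hdisj, ← card_powersetCard]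
  exact card_le_card (union_subset h𝒜 himage)

/-! ### Cross-intersecting families -/

lemma CrossIntersecting.card_add_choose_le (h : CrossIntersecting ℒ ℬ)
    (hℒ : ℒ ⊆ W.powersetCard k) (hℬ : ℬ ⊆ W.powersetCard l) (hne : ℬ.Nonempty) :
    #ℒ + (#W - l).choose k ≤ (#W).choose k := by
  obtain ⟨B, hB⟩ := hne
  obtain ⟨hBW, rfl⟩ := mem_powersetCard.1 (hℬ hB)
  exact card_add_choose_le_of_forall_not_disjoint hℒ hBW fun A hA ↦ h hA hB

lemma CrossIntersecting.card_add_card_add_choose_le_of_cross (hℒℳ : CrossIntersecting ℒ ℳ)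
    (hℒℬ : CrossIntersecting ℒ ℬ) (hℳ𝒜 : CrossIntersecting ℳ 𝒜) (hℒ : ℒ ⊆ W.powersetCard k)
    (hℳ : ℳ ⊆ W.powersetCard k) (h𝒜 : 𝒜 ⊆ W.powersetCard (k + 1))
    (hℬ : ℬ ⊆ W.powersetCard (k + 1)) (hne𝒜 : 𝒜.Nonempty) (hneℬ : ℬ.Nonempty)
    (hW : 2 * k + 1 ≤ #W)
    (hbound : ℒ.Nonempty → ℳ.Nonempty → #ℒ + #ℳ + (#W - k).choose k ≤ (#W).choose k + 1) :
    #ℒ + #ℳ + (#W - (k + 1)).choose k ≤ (#W).choose k := by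
  obtain rfl | hneℒ := ℒ.eq_empty_or_nonempty
  · simpa using hℳ𝒜.card_add_choose_le hℳ h𝒜 hne𝒜
  obtain rfl | hneℳ := ℳ.eq_empty_or_nonempty
  · simpa using hℒℬ.card_add_choose_le hℒ hℬ hneℬ
  have hlt := choose_lt_choose_succ (m := #W - (k + 1))
    (hℒℳ.pos_of_nonempty hℒ hneℒ hneℳ) (by omega)
  rw [show #W - (k + 1) + 1 = #W - k by omega] at hlt
  have := hbound hneℒ hneℳ
  omega

theorem CrossIntersecting.card_add_card_add_choose_le (h : CrossIntersecting 𝒜 ℬ)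
    (h𝒜 : 𝒜 ⊆ V.powersetCard k) (hℬ : ℬ ⊆ V.powersetCard k) (hne𝒜 : 𝒜.Nonempty)
    (hneℬ : ℬ.Nonempty) (hV : 2 * k ≤ #V) :
    #𝒜 + #ℬ + (#V - k).choose k ≤ (#V).choose k + 1 := by
  classical
  induction hm : #V generalizing k V 𝒜 ℬ with
  | zero => grind [h.pos_of_nonempty h𝒜 hne𝒜 hneℬ]
  | succ m ih =>
    obtain hV | hV := hV.eq_or_lt
    · have := h.card_add_card_le_choose h𝒜 hℬ (by omega)
      rw [← hm, show #V - k = k by omega, Nat.choose_self]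
      omega
    obtain ⟨x, hx⟩ : V.Nonempty := card_pos.1 (by omega)
    have hcard : #(V.erase x) = m := by rw [card_erase_of_mem hx, hm, Nat.add_sub_cancel]
    induction 𝒜, ℬ using compression_induction₂ x V with
    | step 𝒜 ℬ i hi ih =>
      simp only [UV.card_compression, ← card_pos] at ih hne𝒜 hneℬ
      exact ih h.compression (compression_subset_powersetCard h𝒜 hi)
        (compression_subset_powersetCard hℬ hi) hne𝒜 hneℬ
    | shifted 𝒜 ℬ hs𝒜 hsℬ =>
      obtain ⟨k, rfl⟩ := Nat.exists_eq_add_one.2 (h.pos_of_nonempty h𝒜 hne𝒜 hneℬ)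
      have h𝒜₀ := nonMemberSubfamily_subset_powersetCard x h𝒜
      have hℬ₀ := nonMemberSubfamily_subset_powersetCard x hℬ
      have hne𝒜₀ := hs𝒜.nonMemberSubfamily_nonempty h𝒜 (by omega) hne𝒜
      have hneℬ₀ := hsℬ.nonMemberSubfamily_nonempty hℬ (by omega) hneℬ
      have h𝒜₁ := memberSubfamily_subset_powersetCard x h𝒜
      have hℬ₁ := memberSubfamily_subset_powersetCard x hℬ
      have havoid := ih (h.nonMemberSubfamily x) h𝒜₀ hℬ₀ hne𝒜₀ hneℬ₀ (by omega) hcard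
      have hcross := h.memberSubfamily h𝒜 hℬ (by omega) hs𝒜
      have hlink := hcross.card_add_card_add_choose_le_of_cross
        (h.memberSubfamily_nonMemberSubfamily x) (h.symm.memberSubfamily_nonMemberSubfamily x)
        h𝒜₁ hℬ₁ h𝒜₀ hℬ₀ hne𝒜₀ hneℬ₀ (by omega)
        fun hne𝒜₁ hneℬ₁ ↦ hcard ▸ ih hcross h𝒜₁ hℬ₁ hne𝒜₁ hneℬ₁ (by omega) hcard
      rw [hcard] at hlink
      rw [show m + 1 - (k + 1) = m - (k + 1) + 1 by omega, Nat.choose_succ_succ',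
        Nat.choose_succ_succ', ← card_memberSubfamily_add_card_nonMemberSubfamily x 𝒜,
        ← card_memberSubfamily_add_card_nonMemberSubfamily x ℬ]
      omega

/-! ### Non-trivial intersecting families -/

lemma CrossIntersecting.card_add_choose_le_of_pair (h : CrossIntersecting 𝒜 𝒜)
    (h𝒜 : 𝒜 ⊆ V.powersetCard k) (hnt : IsNontrivial 𝒜) (hk : 2 ≤ k) (hV : 2 * k ≤ #V)
    (hi : i ∈ V) (hx : x ∈ V) (hpair : ∀ A ∈ 𝒜, i ∈ A ∨ x ∈ A) :
    #𝒜 + (#V - k - 1).choose (k - 1) ≤ (#V - 1).choose (k - 1) + 1 := by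
  classical
  obtain ⟨k, rfl⟩ := Nat.exists_eq_add_of_le' hk
  obtain ⟨A, hA, hiA⟩ := hnt i
  obtain ⟨B, hB, hxB⟩ := hnt x
  have hxA := (hpair A hA).resolve_left hiA
  have hiB := (hpair B hB).resolve_right hxB
  have hcard : #((V.erase i).erase x) = #V - 2 := by
    rw [card_erase_of_mem (mem_erase.2 ⟨ne_of_mem_of_not_mem hxA hiA, hx⟩), card_erase_of_mem hi,
      Nat.sub_sub]
  have hlink := memberSubfamily_subset_powersetCard i h𝒜
  have hA' : A.erase x ∈ (𝒜.nonMemberSubfamily i).memberSubfamily x := by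
    simp [mem_memberSubfamily, mem_nonMemberSubfamily, insert_erase hxA, hA, hiA]
  have hB' : B.erase i ∈ (𝒜.memberSubfamily i).nonMemberSubfamily x := by
    simp [mem_memberSubfamily, mem_nonMemberSubfamily, insert_erase hiB, hB, hxB]
  have hcross := ((h.memberSubfamily_nonMemberSubfamily i).symm.memberSubfamily_nonMemberSubfamily
    x).card_add_card_add_choose_le
    (memberSubfamily_subset_powersetCard x (nonMemberSubfamily_subset_powersetCard i h𝒜))
    (nonMemberSubfamily_subset_powersetCard x hlink) ⟨_, hA'⟩ ⟨_, hB'⟩ (by omega)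
  have hboth := card_le_card (memberSubfamily_subset_powersetCard x hlink)
  have havoid : ∀ C ∈ 𝒜.nonMemberSubfamily i, x ∈ C := fun C hC ↦
    (hpair C (mem_nonMemberSubfamily.1 hC).1).resolve_left (mem_nonMemberSubfamily.1 hC).2
  rw [card_memberSubfamily_of_forall_mem havoid, hcard] at hcross
  rw [card_powersetCard, hcard] at hboth
  have hpascal := Nat.choose_succ_succ' (#V - 2) k
  rw [show #V - 2 + 1 = #V - 1 by omega] at hpascal
  rw [← card_memberSubfamily_add_card_nonMemberSubfamily i 𝒜,
    ← card_memberSubfamily_add_card_nonMemberSubfamily x (𝒜.memberSubfamily i),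
    show #V - (k + 2) - 1 = #V - 2 - (k + 1) by omega, show k + 2 - 1 = k + 1 by rfl]
  omega

lemma CrossIntersecting.card_add_choose_le_of_isNontrivial (hℒ𝒜 : CrossIntersecting ℒ 𝒜)
    (hℒℒ : CrossIntersecting ℒ ℒ) (hℒ : ℒ ⊆ W.powersetCard k) (h𝒜 : 𝒜 ⊆ W.powersetCard l)
    (hnt : IsNontrivial 𝒜) (hk : 0 < k) (hkl : k < l) (hW : k + l ≤ #W)
    (hbound : IsNontrivial ℒ → #ℒ + (#W - k - 1).choose (k - 1) ≤ (#W - 1).choose (k - 1) + 1) :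
    #ℒ + (#W - l - 1).choose (k - 1) ≤ (#W - 1).choose (k - 1) := by
  classical
  obtain rfl | hne := ℒ.eq_empty_or_nonempty
  · simpa using Nat.choose_le_choose (k - 1) (by omega)
  by_cases hntℒ : IsNontrivial ℒ
  · have h2 := hℒℒ.two_le_of_isNontrivial hℒ hntℒ hne
    have hlt := choose_lt_choose_succ (m := #W - l - 1) (k := k - 1) (by omega) (by omega)
    have := hlt.trans_le (Nat.choose_le_choose (k - 1) (show _ ≤ #W - k - 1 by omega))
    have := hbound hntℒ
    omega
  · simp only [IsNontrivial, not_forall, not_exists, not_and, not_not] at hntℒ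
    obtain ⟨y, hy⟩ := hntℒ
    obtain ⟨B, hB, hyB⟩ := hnt y
    obtain ⟨A, hA⟩ := hne
    have hyW := (mem_powersetCard.1 (hℒ hA)).1 (hy A hA)
    obtain ⟨k, rfl⟩ := Nat.exists_eq_add_one.2 hk
    have := (hℒ𝒜.memberSubfamily_nonMemberSubfamily y).card_add_choose_le
      (memberSubfamily_subset_powersetCard y hℒ) (nonMemberSubfamily_subset_powersetCard y h𝒜)
      ⟨B, mem_nonMemberSubfamily.2 ⟨hB, hyB⟩⟩
    rwa [card_memberSubfamily_of_forall_mem hy, card_erase_of_mem hyW, Nat.sub_right_comm] at this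

lemma CrossIntersecting.card_add_choose_le_of_card_eq (h : CrossIntersecting 𝒜 𝒜)
    (h𝒜 : 𝒜 ⊆ V.powersetCard k) (hk : 0 < k) (hV : #V = 2 * k) :
    #𝒜 + (#V - k - 1).choose (k - 1) ≤ (#V - 1).choose (k - 1) + 1 := by
  obtain ⟨k, rfl⟩ := Nat.exists_eq_add_one.2 hk
  have hcompl := h.card_add_card_le_choose h𝒜 h𝒜 (by omega)
  rw [hV, show 2 * (k + 1) = 2 * k + 1 + 1 by ring, Nat.choose_succ_succ',
    Nat.choose_symm_half] at hcompl
  rw [show #V - (k + 1) - 1 = k by omega, show #V - 1 = 2 * k + 1 by omega, Nat.add_sub_cancel,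
    Nat.choose_self]
  omega

theorem CrossIntersecting.card_add_choose_le_of_self (h : CrossIntersecting 𝒜 𝒜)
    (h𝒜 : 𝒜 ⊆ V.powersetCard k) (hnt : IsNontrivial 𝒜) (hV : 2 * k ≤ #V) :
    #𝒜 + (#V - k - 1).choose (k - 1) ≤ (#V - 1).choose (k - 1) + 1 := by
  classical
  induction hm : #V generalizing k V 𝒜 with
  | zero =>
    obtain rfl : k = 0 := by omega
    simpa [hm] using card_le_card h𝒜
  | succ m ih =>
    obtain ⟨x, hx⟩ : V.Nonempty := card_pos.1 (by omega)
    have hk := h.two_le_of_isNontrivial h𝒜 hnt ((hnt x).imp fun _ ↦ And.left)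
    obtain hV | hV := hV.eq_or_lt
    · exact hm ▸ h.card_add_choose_le_of_card_eq h𝒜 (by omega) hV.symm
    have hcard : #(V.erase x) = m := by rw [card_erase_of_mem hx, hm, Nat.add_sub_cancel]
    induction 𝒜 using compression_induction x V with
    | step 𝒜 i hi ih =>
      by_cases hnt' : IsNontrivial (𝓒 {i} {x} 𝒜)
      · simpa only [UV.card_compression] using
          ih h.compression (compression_subset_powersetCard h𝒜 hi) hnt'
      · exact hm ▸ h.card_add_choose_le_of_pair h𝒜 hnt hk (by omega) hi hx
          (forall_mem_or_mem_of_not_isNontrivial_compression hnt hnt')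
    | shifted 𝒜 hs =>
      obtain ⟨k, rfl⟩ := Nat.exists_eq_add_of_le' hk
      have h𝒜₀ := nonMemberSubfamily_subset_powersetCard x h𝒜
      have h𝒜₁ := memberSubfamily_subset_powersetCard x h𝒜
      have hnt₀ := hs.isNontrivial_nonMemberSubfamily h𝒜 (by omega) hnt
      have hcross := h.memberSubfamily h𝒜 h𝒜 (by omega) hs
      have havoid := ih (h.nonMemberSubfamily x) h𝒜₀ hnt₀ (by omega) hcard
      have hlink := (h.memberSubfamily_nonMemberSubfamily x).card_add_choose_le_of_isNontrivial
        hcross h𝒜₁ h𝒜₀ hnt₀ (by omega) (by omega) (by omega)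
        fun hnt₁ ↦ hcard ▸ ih hcross h𝒜₁ hnt₁ (by omega) hcard
      rw [hcard] at hlink
      rw [show m + 1 - (k + 2) - 1 = m - (k + 2) - 1 + 1 by omega,
        show m + 1 - 1 = m - 1 + 1 by omega, show k + 2 - 1 = k + 1 by rfl, Nat.choose_succ_succ',
        Nat.choose_succ_succ', ← card_memberSubfamily_add_card_nonMemberSubfamily x 𝒜]
      simp only [Nat.add_one_sub_one] at hlink havoid
      omega

end HiltonMilner

theorem hilton_milner_general {α : Type*} [DecidableEq α] {V : Finset α} {k : ℕ}
    (hk : 2 * k ≤ #V) {ℱ : Finset (Finset α)} (hℱ : ℱ ⊆ V.powersetCard k)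
    (hint : ∀ F ∈ ℱ, ∀ F' ∈ ℱ, (F ∩ F').Nonempty) (hnontriv : ¬∃ x, ∀ F ∈ ℱ, x ∈ F) :
    #ℱ ≤ (#V - 1).choose (k - 1) - (#V - k - 1).choose (k - 1) + 1 := by
  have hcross : HiltonMilner.CrossIntersecting ℱ ℱ :=
    fun F hF F' hF' ↦ not_disjoint_iff_nonempty_inter.2 (hint F hF F' hF')
  have hnt : HiltonMilner.IsNontrivial ℱ := by simpa [HiltonMilner.IsNontrivial] using hnontriv
  have := hcross.card_add_choose_le_of_self hℱ hnt hk
  omega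

/-- Hilton–Milner Theorem. -/
theorem hilton_milner (n k : ℕ) (hk : 2 ≤ k) (hnk : 2 * k ≤ n)
    (ℱ : Finset (Finset ℕ)) (hℱ : ℱ ⊆ (Finset.Icc 1 n).powersetCard k)
    (hint : ∀ F ∈ ℱ, ∀ F' ∈ ℱ, (F ∩ F').Nonempty)
    (hnontriv : ¬ ∃ x, ∀ F ∈ ℱ, x ∈ F) :
    ℱ.card ≤ Nat.choose (n - 1) (k - 1) - Nat.choose (n - k - 1) (k - 1) + 1 := by
  simpa using hilton_milner_general (by simpa using hnk) hℱ hint hnontriv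
end
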